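/- For every real σ ≥ 2 there exists a constant C > 0 such that for all smooth real-valued 2π-periodic functions u, |∫₀^{2π} D^σ(u·∂ₓu)·(D^σ u) dx| ≤ C·‖u‖_{H²}·‖u‖_{H^σ}². -/

import Mathlib

/-- The `n`-th Fourier coefficient of a `2π`-periodic function:
`ĥ(n) = (1/2π) ∫₀^{2π} h(x) e^{-inx} dx`. -/
noncomputable def fourierCoef (f : ℝ → ℂ) (n : ℤ) : ℂ :=
  (1 / (2 * Real.pi)) * ∫ x in (0:ℝ)..(2 * Real.pi), f x * Complex.exp (-Complex.I * n * x)

/-- The Fourier multiplier `D^s = (1 - ∂ₓ²)^{s/2}`, multiplying the `n`-th Fourier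
coefficient by `(1 + n²)^{s/2}`. -/
noncomputable def Dop (s : ℝ) (f : ℝ → ℂ) : ℝ → ℂ :=
  fun x => ∑' n : ℤ, ((1 + (n : ℝ) ^ 2) ^ (s / 2) : ℝ) * fourierCoef f n *
    Complex.exp (Complex.I * n * x)

/-- The Sobolev norm `‖h‖_{H^s} = (Σ_{n∈ℤ} (1+n²)^s |ĥ(n)|²)^{1/2}`. -/
noncomputable def sobNorm (s : ℝ) (f : ℝ → ℂ) : ℝ :=
  Real.sqrt (∑' n : ℤ, (1 + (n : ℝ) ^ 2) ^ s * ‖fourierCoef f n‖ ^ 2)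

/-- The `L²(0,2π)` norm. -/
noncomputable def L2Norm (f : ℝ → ℂ) : ℝ :=
  Real.sqrt (∫ x in (0:ℝ)..(2 * Real.pi), ‖f x‖ ^ 2)

/-!
Write `F x = x (1 + x²)^σ` and `a n` for the Fourier coefficients of `f`. Since
`f ∂ₓf = ∂ₓ(f²) / 2`, the energy pairing is, up to a factor `-πi`, the sum of
`F k · a k · a l · a m` over `k + l + m = 0`. The product `a k · a l · a m` is symmetric, so `F k`
may be replaced by the average of `F k`, `F l` and `F m`. As `F` is odd, the mean value theorem
applied to `F l - F (-m)` gains a derivative: if `k` is the smallest of the three frequencies, then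
`F k + F l + F m` is bounded by a multiple of `(1 + k²)^(1/2) (1 + l²)^(σ/2) (1 + m²)^(σ/2)`.
Young's inequality then bounds the sum by `‖f‖²` in `H^σ` times the `ℓ¹` norm of
`(1 + n²)^(1/2) |a n|`, which Cauchy–Schwarz controls by any `H^s` norm with `s > 3/2`.
-/

open Real MeasureTheory
open scoped ContDiff

section Sums

lemma summable_mul_and_tsum_mul_le_sqrt_mul_sqrt {ι : Type*} {f g : ι → ℝ}
    (hf₀ : ∀ i, 0 ≤ f i) (hg₀ : ∀ i, 0 ≤ g i)
    (hf : Summable fun i => f i ^ 2) (hg : Summable fun i => g i ^ 2) :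
    (Summable fun i => f i * g i) ∧ ∑' i, f i * g i ≤ √(∑' i, f i ^ 2) * √(∑' i, g i ^ 2) := by
  simpa only [sqrt_eq_rpow, rpow_two] using
    summable_and_inner_le_Lp_mul_Lq_tsum_of_nonneg .two_two hf₀ hg₀
      (by simpa only [rpow_two] using hf) (by simpa only [rpow_two] using hg)

lemma summable_and_tsum_zeroSum_mul_le {G : Type*} [AddGroup G] {P Q R : G → ℝ}
    (hP₀ : ∀ x, 0 ≤ P x) (hQ₀ : ∀ x, 0 ≤ Q x) (hR₀ : ∀ x, 0 ≤ R x)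
    (hP : Summable P) (hQ : Summable fun x => Q x ^ 2) (hR : Summable fun x => R x ^ 2) :
    (Summable fun p : G × G => P p.1 * (Q p.2 * R (-p.1 - p.2))) ∧
      ∑' p : G × G, P p.1 * (Q p.2 * R (-p.1 - p.2)) ≤
        (∑' x, P x) * (√(∑' x, Q x ^ 2) * √(∑' x, R x ^ 2)) := by
  have fiber (x : G) : (Summable fun y => Q y * R (-x - y)) ∧
      ∑' y, Q y * R (-x - y) ≤ √(∑' y, Q y ^ 2) * √(∑' y, R y ^ 2) := by
    rw [← (Equiv.subLeft (-x)).tsum_eq fun y => R y ^ 2]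
    have hR_sub : Summable fun y => R (-x - y) ^ 2 := (Equiv.subLeft (-x)).summable_iff.2 hR
    exact summable_mul_and_tsum_mul_le_sqrt_mul_sqrt hQ₀ (fun y => hR₀ _) hQ hR_sub
  have fiber_le (x : G) : ∑' y, P x * (Q y * R (-x - y)) ≤
      P x * (√(∑' y, Q y ^ 2) * √(∑' y, R y ^ 2)) := by
    rw [tsum_mul_left]
    exact mul_le_mul_of_nonneg_left (fiber x).2 (hP₀ x)
  have nonneg (p : G × G) : 0 ≤ P p.1 * (Q p.2 * R (-p.1 - p.2)) :=
    mul_nonneg (hP₀ _) (mul_nonneg (hQ₀ _) (hR₀ _))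
  have summable_fiber : Summable fun x => ∑' y, P x * (Q y * R (-x - y)) :=
    .of_nonneg_of_le (fun x => tsum_nonneg fun y => nonneg (x, y)) fiber_le (hP.mul_right _)
  have summable_prod : Summable fun p : G × G => P p.1 * (Q p.2 * R (-p.1 - p.2)) :=
    (summable_prod_of_nonneg nonneg).2 ⟨fun x => (fiber x).1.mul_left (P x), summable_fiber⟩
  refine ⟨summable_prod, ?_⟩
  rw [summable_prod.tsum_prod, ← tsum_mul_right]
  exact summable_fiber.tsum_le_tsum fiber_le (hP.mul_right _)

/-- The cyclic rotation `(k, l, m) ↦ (l, m, k)` of triples with `k + l + m = 0`, each such triple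
being encoded by its first two entries. -/
def zeroSumRotation (G : Type*) [AddGroup G] : G × G ≃ G × G :=
  (Equiv.prodComm G G).trans <|
    Equiv.prodShear (Equiv.refl G) fun l => (Equiv.neg G).trans (Equiv.subRight l)

lemma zeroSumRotation_apply {G : Type*} [AddGroup G] (k l : G) :
    zeroSumRotation G (k, l) = (l, -k - l) := rfl

lemma norm_tsum_le_tsum_of_norm_add_perm_le {ι E : Type*} [NormedAddCommGroup E]
    [NormedSpace ℝ E] (e : Equiv.Perm ι) {H : ι → E} {T : ι → ℝ} (hH : Summable H)
    (hT : Summable T)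
    (h : ∀ i, ‖H i + H (e i) + H (e (e i))‖ ≤ T i + T (e i) + T (e (e i))) :
    ‖∑' i, H i‖ ≤ ∑' i, T i := by
  have hH₁ := e.hasSum_iff.2 hH.hasSum
  have hH₂ := e.hasSum_iff.2 hH₁
  have hT₁ := e.hasSum_iff.2 hT.hasSum
  have hT₂ := e.hasSum_iff.2 hT₁
  have key := ((hH.hasSum.add hH₁).add hH₂).norm_le_of_bounded ((hT.hasSum.add hT₁).add hT₂) h
  have norm_add_self_add_self (v : E) : ‖v + v + v‖ = 3 * ‖v‖ := by
    rw [show v + v + v = (3 : ℝ) • v by module, norm_smul, norm_ofNat]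
  rw [norm_add_self_add_self] at key
  linarith

end Sums

section Weights

lemma rpow_half_sq {x : ℝ} (hx : 0 ≤ x) (s : ℝ) : (x ^ (s / 2)) ^ 2 = x ^ s := by
  rw [← rpow_mul_natCast hx, Nat.cast_ofNat, div_mul_cancel₀ s two_ne_zero]

lemma summable_one_add_int_sq_rpow {r : ℝ} (hr : r < -1 / 2) :
    Summable fun n : ℤ => (1 + (n : ℝ) ^ 2) ^ r := by
  refine .of_norm_bounded_eventually (summable_abs_int_rpow (b := -2 * r) (by linarith)) ?_
  filter_upwards [(Set.finite_singleton (0 : ℤ)).compl_mem_cofinite] with n hn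
  have hn_pos : 0 < |(n : ℝ)| := abs_pos.2 (Int.cast_ne_zero.2 hn)
  rw [norm_of_nonneg (by positivity), neg_mul, neg_neg, rpow_mul hn_pos.le, rpow_two, sq_abs]
  exact rpow_le_rpow_of_nonpos (by rw [← sq_abs]; positivity) (by linarith) (by linarith)

lemma tsum_rpow_mul_norm_le_sqrt_mul_sqrt {E : Type*} [SeminormedAddCommGroup E] {r s : ℝ}
    (hrs : 2 * r + 1 / 2 < s) {a : ℤ → E}
    (ha : Summable fun n : ℤ => (1 + (n : ℝ) ^ 2) ^ s * ‖a n‖ ^ 2) :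
    ∑' n : ℤ, (1 + (n : ℝ) ^ 2) ^ r * ‖a n‖ ≤
      √(∑' n : ℤ, (1 + (n : ℝ) ^ 2) ^ (2 * r - s)) *
        √(∑' n : ℤ, (1 + (n : ℝ) ^ 2) ^ s * ‖a n‖ ^ 2) := by
  have factor (n : ℤ) : (1 + (n : ℝ) ^ 2) ^ r * ‖a n‖ =
      (1 + (n : ℝ) ^ 2) ^ ((2 * r - s) / 2) * ((1 + (n : ℝ) ^ 2) ^ (s / 2) * ‖a n‖) := by
    rw [← mul_assoc, ← rpow_add (by positivity)]
    ring_nf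
  have sq_fst (n : ℤ) : ((1 + (n : ℝ) ^ 2) ^ ((2 * r - s) / 2)) ^ 2 =
      (1 + (n : ℝ) ^ 2) ^ (2 * r - s) := rpow_half_sq (by positivity) _
  have sq_snd (n : ℤ) : ((1 + (n : ℝ) ^ 2) ^ (s / 2) * ‖a n‖) ^ 2 =
      (1 + (n : ℝ) ^ 2) ^ s * ‖a n‖ ^ 2 := by rw [mul_pow, rpow_half_sq (by positivity)]
  have key := (summable_mul_and_tsum_mul_le_sqrt_mul_sqrt
    (f := fun n : ℤ => (1 + (n : ℝ) ^ 2) ^ ((2 * r - s) / 2))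
    (g := fun n : ℤ => (1 + (n : ℝ) ^ 2) ^ (s / 2) * ‖a n‖)
    (fun n => by positivity) (fun n => by positivity)
    (by simpa only [sq_fst] using summable_one_add_int_sq_rpow (by linarith))
    (by simpa only [sq_snd] using ha)).2
  simpa only [factor, sq_fst, sq_snd] using key

end Weights

section Resonance

/-- The symbol `x (1 + x²)^σ` of `-i ∂ₓ D^{2σ}`. -/
noncomputable def energySymbol (σ x : ℝ) : ℝ := x * (1 + x ^ 2) ^ σ

lemma energySymbol_neg (σ x : ℝ) : energySymbol σ (-x) = -energySymbol σ x := by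
  simp only [energySymbol, neg_sq, neg_mul]

lemma hasDerivAt_energySymbol (σ x : ℝ) :
    HasDerivAt (energySymbol σ)
      ((1 + x ^ 2) ^ σ + 2 * σ * x ^ 2 * (1 + x ^ 2) ^ (σ - 1)) x := by
  have h_base : HasDerivAt (fun y : ℝ => 1 + y ^ 2) (2 * x) x := by
    simpa using (hasDerivAt_pow 2 x).const_add 1
  refine ((hasDerivAt_id x).fun_mul
    (h_base.rpow_const (p := σ) (.inl (by positivity)))).congr_deriv ?_
  simp only [id_eq]
  ring

lemma abs_deriv_energySymbol_le {σ : ℝ} (hσ : 0 ≤ σ) (x : ℝ) :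
    |(1 + x ^ 2) ^ σ + 2 * σ * x ^ 2 * (1 + x ^ 2) ^ (σ - 1)| ≤
      (1 + 2 * σ) * (1 + x ^ 2) ^ σ := by
  rw [abs_of_nonneg (by positivity)]
  calc (1 + x ^ 2) ^ σ + 2 * σ * x ^ 2 * (1 + x ^ 2) ^ (σ - 1)
      ≤ (1 + x ^ 2) ^ σ + 2 * σ * (1 + x ^ 2) * (1 + x ^ 2) ^ (σ - 1) := by
        gcongr
        linarith
    _ = (1 + 2 * σ) * (1 + x ^ 2) ^ σ := by
        rw [rpow_sub_one (by positivity)]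
        field_simp

lemma abs_energySymbol_sub_le {σ : ℝ} (hσ : 0 ≤ σ) {R x y : ℝ} (hx : |x| ≤ R) (hy : |y| ≤ R) :
    |energySymbol σ x - energySymbol σ y| ≤ (1 + 2 * σ) * (1 + R ^ 2) ^ σ * |x - y| := by
  refine (convex_Icc (-R) R).norm_image_sub_le_of_norm_hasDerivWithin_le
    (fun z _ => (hasDerivAt_energySymbol σ z).hasDerivWithinAt) (fun z hz => ?_)
    (abs_le.1 hy) (abs_le.1 hx)
  have hzR : z ^ 2 ≤ R ^ 2 := sq_le_sq' hz.1 hz.2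
  exact (abs_deriv_energySymbol_le hσ z).trans (by gcongr)

lemma abs_energySymbol_le (σ x : ℝ) :
    |energySymbol σ x| ≤ (1 + x ^ 2) ^ (1 / 2 : ℝ) * (1 + x ^ 2) ^ σ := by
  rw [energySymbol, abs_mul, abs_of_nonneg (by positivity : 0 ≤ (1 + x ^ 2) ^ σ)]
  gcongr
  exact (abs_le_sqrt (by linarith)).trans_eq (sqrt_eq_rpow _)

lemma rpow_le_rpow_half_mul_rpow_half {A B c s : ℝ} (hA : 0 ≤ A) (hB : 0 ≤ B) (hc : 0 ≤ c)
    (hs : 0 ≤ s) (h : A ≤ c * B) :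
    A ^ s ≤ c ^ (s / 2) * (A ^ (s / 2) * B ^ (s / 2)) :=
  calc A ^ s = A ^ (s / 2) * A ^ (s / 2) := by rw [← sq, rpow_half_sq hA]
    _ ≤ A ^ (s / 2) * (c * B) ^ (s / 2) := by gcongr
    _ = c ^ (s / 2) * (A ^ (s / 2) * B ^ (s / 2)) := by
        rw [mul_rpow hc hB]
        ring

/-- The constant in the resonance bound `abs_energySymbol_add_add_le`: the summand `1` accounts for
the smallest frequency, and `1 + 2 * σ` comes from the derivative of the symbol. -/
noncomputable def resonanceConst (σ : ℝ) : ℝ := 1 + (1 + 2 * σ) * 4 ^ (σ / 2)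

lemma resonanceConst_pos {σ : ℝ} (hσ : 0 ≤ σ) : 0 < resonanceConst σ := by
  unfold resonanceConst
  positivity

lemma abs_energySymbol_add_add_le_of_abs_le {σ : ℝ} (hσ : 0 ≤ σ) {k l m : ℝ} (h : k + l + m = 0)
    (hkl : |k| ≤ |l|) (hkm : |k| ≤ |m|) :
    |energySymbol σ k + energySymbol σ l + energySymbol σ m| ≤ resonanceConst σ *
      ((1 + k ^ 2) ^ (1 / 2 : ℝ) * ((1 + l ^ 2) ^ (σ / 2) * (1 + m ^ 2) ^ (σ / 2))) := by
  wlog hml : |m| ≤ |l| generalizing l m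
  · rw [add_right_comm, mul_comm ((1 + l ^ 2) ^ (σ / 2))]
    exact this (by linarith) hkm hkl (le_of_not_ge hml)
  set K := (1 + k ^ 2) ^ (1 / 2 : ℝ)
  set LM := (1 + l ^ 2) ^ (σ / 2) * (1 + m ^ 2) ^ (σ / 2)
  have k_sq_le_l_sq : k ^ 2 ≤ l ^ 2 := sq_le_sq.2 hkl
  have k_sq_le_m_sq : k ^ 2 ≤ m ^ 2 := sq_le_sq.2 hkm
  have abs_k_le : |k| ≤ K := (abs_le_sqrt (by linarith)).trans_eq (sqrt_eq_rpow _)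
  have symbol_k_le : |energySymbol σ k| ≤ K * LM := by
    refine (abs_energySymbol_le σ k).trans ?_
    rw [← rpow_half_sq (by positivity) σ, sq ((1 + k ^ 2) ^ (σ / 2))]
    simp only [LM]
    gcongr
  have l_weight_le : (1 + l ^ 2) ^ σ ≤ 4 ^ (σ / 2) * LM := by
    refine rpow_le_rpow_half_mul_rpow_half (by positivity) (by positivity) (by norm_num) hσ ?_
    rw [show l = -(k + m) by linarith]
    linarith [sq_nonneg (k - m)]
  have symbol_l_add_m_le :
      |energySymbol σ l + energySymbol σ m| ≤ (1 + 2 * σ) * (4 ^ (σ / 2) * LM) * K :=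
    calc |energySymbol σ l + energySymbol σ m| = |energySymbol σ l - energySymbol σ (-m)| := by
          rw [energySymbol_neg, sub_neg_eq_add]
      _ ≤ (1 + 2 * σ) * (1 + |l| ^ 2) ^ σ * |l - -m| :=
          abs_energySymbol_sub_le hσ le_rfl (by rwa [abs_neg])
      _ ≤ (1 + 2 * σ) * (4 ^ (σ / 2) * LM) * K := by
          rw [sq_abs, show l - -m = -k by linarith, abs_neg]
          gcongr
  calc |energySymbol σ k + energySymbol σ l + energySymbol σ m|
      ≤ |energySymbol σ k| + |energySymbol σ l + energySymbol σ m| := by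
        rw [add_assoc]
        exact abs_add_le _ _
    _ ≤ K * LM + (1 + 2 * σ) * (4 ^ (σ / 2) * LM) * K := by gcongr
    _ = resonanceConst σ * (K * LM) := by
        rw [resonanceConst]
        ring

lemma abs_energySymbol_add_add_le {σ : ℝ} (hσ : 0 ≤ σ) {k l m : ℝ} (h : k + l + m = 0) :
    |energySymbol σ k + energySymbol σ l + energySymbol σ m| ≤ resonanceConst σ *
      ((1 + k ^ 2) ^ (1 / 2 : ℝ) * ((1 + l ^ 2) ^ (σ / 2) * (1 + m ^ 2) ^ (σ / 2)) +
       (1 + l ^ 2) ^ (1 / 2 : ℝ) * ((1 + m ^ 2) ^ (σ / 2) * (1 + k ^ 2) ^ (σ / 2)) +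
       (1 + m ^ 2) ^ (1 / 2 : ℝ) * ((1 + k ^ 2) ^ (σ / 2) * (1 + l ^ 2) ^ (σ / 2))) := by
  have weight_nonneg (x y z : ℝ) :
      0 ≤ (1 + x ^ 2) ^ (1 / 2 : ℝ) * ((1 + y ^ 2) ^ (σ / 2) * (1 + z ^ 2) ^ (σ / 2)) := by
    positivity
  have smallest : (|k| ≤ |l| ∧ |k| ≤ |m|) ∨ (|l| ≤ |m| ∧ |l| ≤ |k|) ∨ (|m| ≤ |k| ∧ |m| ≤ |l|) := by
    grind
  obtain ⟨h₁, h₂⟩ | ⟨h₁, h₂⟩ | ⟨h₁, h₂⟩ := smallest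
  · refine (abs_energySymbol_add_add_le_of_abs_le hσ h h₁ h₂).trans
      (mul_le_mul_of_nonneg_left ?_ (resonanceConst_pos hσ).le)
    linarith [weight_nonneg l m k, weight_nonneg m k l]
  · rw [add_rotate]
    refine (abs_energySymbol_add_add_le_of_abs_le hσ (by linarith) h₁ h₂).trans
      (mul_le_mul_of_nonneg_left ?_ (resonanceConst_pos hσ).le)
    linarith [weight_nonneg k l m, weight_nonneg m k l]
  · rw [← add_rotate]
    refine (abs_energySymbol_add_add_le_of_abs_le hσ (by linarith) h₁ h₂).trans
      (mul_le_mul_of_nonneg_left ?_ (resonanceConst_pos hσ).le)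
    linarith [weight_nonneg k l m, weight_nonneg l m k]

end Resonance

section EnergySum

/-- The summand of the energy pairing `∑ F k · a k · a l · a m` over `k + l + m = 0`, where
`F = energySymbol σ` and the triple `(k, l, m)` is encoded by `p = (k, l)`. -/
noncomputable def energyTerm (σ : ℝ) (a : ℤ → ℂ) (p : ℤ × ℤ) : ℂ :=
  energySymbol σ p.1 * (a p.1 * (a p.2 * a (-p.1 - p.2)))

lemma summable_energyTerm {σ : ℝ} {a : ℤ → ℂ}
    (ha : Summable fun n : ℤ => (1 + (n : ℝ) ^ 2) ^ (1 / 2 + σ) * ‖a n‖)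
    (ha₂ : Summable fun n => ‖a n‖ ^ 2) : Summable (energyTerm σ a) := by
  refine .of_norm_bounded (summable_and_tsum_zeroSum_mul_le (fun n => by positivity)
    (fun n => norm_nonneg _) (fun n => norm_nonneg _) ha ha₂ ha₂).1 fun p => ?_
  rw [energyTerm, norm_mul, norm_mul, norm_mul, Complex.norm_real, norm_eq_abs, ← mul_assoc,
    rpow_add (by positivity)]
  gcongr
  exact abs_energySymbol_le σ p.1

lemma norm_energySymbol_cyclic_sum_le {σ : ℝ} (hσ : 0 ≤ σ) (a : ℤ → ℂ) {k l m : ℤ}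
    (h : k + l + m = 0) :
    ‖energySymbol σ k * (a k * (a l * a m)) + energySymbol σ l * (a l * (a m * a k)) +
        energySymbol σ m * (a m * (a k * a l))‖ ≤ resonanceConst σ *
      ((1 + (k : ℝ) ^ 2) ^ (1 / 2 : ℝ) * ((1 + (l : ℝ) ^ 2) ^ (σ / 2) *
          (1 + (m : ℝ) ^ 2) ^ (σ / 2)) +
        (1 + (l : ℝ) ^ 2) ^ (1 / 2 : ℝ) * ((1 + (m : ℝ) ^ 2) ^ (σ / 2) *
          (1 + (k : ℝ) ^ 2) ^ (σ / 2)) +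
        (1 + (m : ℝ) ^ 2) ^ (1 / 2 : ℝ) * ((1 + (k : ℝ) ^ 2) ^ (σ / 2) *
          (1 + (l : ℝ) ^ 2) ^ (σ / 2))) * (‖a k‖ * (‖a l‖ * ‖a m‖)) := by
  have h_real : (k : ℝ) + l + m = 0 := by exact_mod_cast h
  have symmetrize : energySymbol σ k * (a k * (a l * a m)) +
      energySymbol σ l * (a l * (a m * a k)) + energySymbol σ m * (a m * (a k * a l)) =
      ((energySymbol σ k + energySymbol σ l + energySymbol σ m : ℝ) : ℂ) *
        (a k * (a l * a m)) := by
    push_cast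
    ring
  rw [symmetrize, norm_mul, norm_mul, norm_mul, Complex.norm_real, norm_eq_abs]
  exact mul_le_mul_of_nonneg_right (abs_energySymbol_add_add_le hσ h_real) (by positivity)

lemma norm_tsum_energyTerm_le {σ : ℝ} (hσ : 0 ≤ σ) {a : ℤ → ℂ}
    (h_energy : Summable (energyTerm σ a))
    (ha : Summable fun n : ℤ => (1 + (n : ℝ) ^ 2) ^ (1 / 2 : ℝ) * ‖a n‖)
    (ha₂ : Summable fun n : ℤ => (1 + (n : ℝ) ^ 2) ^ σ * ‖a n‖ ^ 2) :
    ‖∑' p, energyTerm σ a p‖ ≤ resonanceConst σ *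
      ((∑' n : ℤ, (1 + (n : ℝ) ^ 2) ^ (1 / 2 : ℝ) * ‖a n‖) *
        ∑' n : ℤ, (1 + (n : ℝ) ^ 2) ^ σ * ‖a n‖ ^ 2) := by
  set P : ℤ → ℝ := fun n => (1 + (n : ℝ) ^ 2) ^ (1 / 2 : ℝ) * ‖a n‖
  set Q : ℤ → ℝ := fun n => (1 + (n : ℝ) ^ 2) ^ (σ / 2) * ‖a n‖
  have Q_sq (n : ℤ) : (1 + (n : ℝ) ^ 2) ^ σ * ‖a n‖ ^ 2 = Q n ^ 2 := by
    rw [mul_pow, rpow_half_sq (by positivity)]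
  simp only [Q_sq] at ha₂ ⊢
  have Q_nonneg (n : ℤ) : 0 ≤ Q n := by positivity
  obtain ⟨h_summable, h_le⟩ :=
    summable_and_tsum_zeroSum_mul_le (fun n => by positivity) Q_nonneg Q_nonneg ha ha₂ ha₂
  rw [mul_self_sqrt (tsum_nonneg fun n => sq_nonneg _)] at h_le
  refine (norm_tsum_le_tsum_of_norm_add_perm_le (zeroSumRotation ℤ) h_energy
    (h_summable.mul_left (resonanceConst σ)) ?_).trans ?_
  · rintro ⟨k, l⟩
    have third_rot : -l - (-k - l) = k := by ring
    have third_rot_rot : -(-k - l) - k = l := by ring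
    have zero_sum : k + l + (-k - l) = 0 := by ring
    simp only [zeroSumRotation_apply, energyTerm, third_rot, third_rot_rot]
    refine (norm_energySymbol_cyclic_sum_le hσ a zero_sum).trans_eq ?_
    ring
  · rw [tsum_mul_left]
    exact mul_le_mul_of_nonneg_left h_le (resonanceConst_pos hσ).le

end EnergySum

section FourierCoef

lemma norm_exp_I_mul_int_mul (n : ℤ) (x : ℝ) : ‖Complex.exp (Complex.I * n * x)‖ = 1 := by
  rw [mul_assoc]
  exact_mod_cast Complex.norm_exp_I_mul_ofReal (n * x)

lemma norm_exp_neg_I_mul_int_mul (n : ℤ) (x : ℝ) : ‖Complex.exp (-Complex.I * n * x)‖ = 1 := by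
  simpa using norm_exp_I_mul_int_mul (-n) x

lemma exp_neg_I_mul_int_mul_two_pi (n : ℤ) :
    Complex.exp (-Complex.I * n * (2 * π : ℝ)) = 1 := by
  rw [Complex.exp_eq_one_iff]
  exact ⟨-n, by push_cast; ring⟩

lemma fourier_coe_two_pi (n : ℤ) (x : ℝ) :
    fourier n (x : AddCircle (2 * π)) = Complex.exp (Complex.I * n * x) := by
  rw [fourier_coe_apply]
  congr 1
  push_cast
  field_simp

lemma fourierCoeff_eq_fourierCoef [Fact (0 < 2 * π)] (F : AddCircle (2 * π) → ℂ) (n : ℤ) :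
    fourierCoeff F n = fourierCoef (fun x : ℝ => F x) n := by
  rw [fourierCoeff_eq_intervalIntegral _ _ 0, fourierCoef, zero_add, Complex.real_smul]
  simp only [fourier_coe_two_pi, smul_eq_mul, mul_comm (F _), Int.cast_neg, mul_neg, neg_mul]
  push_cast
  rfl

lemma fourierCoef_exp (m n : ℤ) :
    fourierCoef (fun x => Complex.exp (Complex.I * m * x)) n =
      (Pi.single m 1 : ℤ → ℂ) n := by
  have : Fact (0 < 2 * π) := ⟨two_pi_pos⟩
  simp only [← fourier_coe_two_pi, ← fourierCoeff_eq_fourierCoef, fourierCoeff_fourier]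

lemma fourierCoef_sub {f g : ℝ → ℂ} (hf : Continuous f) (hg : Continuous g) (n : ℤ) :
    fourierCoef (fun x => f x - g x) n = fourierCoef f n - fourierCoef g n := by
  simp only [fourierCoef]
  rw [← mul_sub, ← intervalIntegral.integral_sub
    (Continuous.intervalIntegrable (by fun_prop) _ _)
    (Continuous.intervalIntegrable (by fun_prop) _ _)]
  simp only [sub_mul]

lemma fourierCoef_const_mul (c : ℂ) (f : ℝ → ℂ) (n : ℤ) :
    fourierCoef (fun x => c * f x) n = c * fourierCoef f n := by
  simp only [fourierCoef, mul_assoc c, intervalIntegral.integral_const_mul]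
  ring

lemma fourierCoef_mul_exp (f : ℝ → ℂ) (m n : ℤ) :
    fourierCoef (fun x => f x * Complex.exp (-Complex.I * m * x)) n = fourierCoef f (n + m) := by
  have exp_mul_exp (x : ℝ) : Complex.exp (-Complex.I * m * x) * Complex.exp (-Complex.I * n * x) =
      Complex.exp (-Complex.I * (n + m : ℤ) * x) := by
    rw [← Complex.exp_add]
    congr 1
    push_cast
    ring
  simp only [fourierCoef, mul_assoc (f _), exp_mul_exp]

lemma norm_fourierCoef_le (f : ℝ → ℂ) (n : ℤ) :
    ‖fourierCoef f n‖ ≤ 1 / (2 * π) * ∫ x in (0 : ℝ)..2 * π, ‖f x‖ := by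
  have norm_const : ‖(1 / (2 * π) : ℂ)‖ = 1 / (2 * π) := by
    exact_mod_cast norm_of_nonneg (by positivity : 0 ≤ 1 / (2 * π))
  rw [fourierCoef, norm_mul, norm_const]
  gcongr
  refine (intervalIntegral.norm_integral_le_integral_norm two_pi_pos.le).trans_eq ?_
  simp only [norm_mul, norm_exp_neg_I_mul_int_mul, mul_one]

lemma fourierCoef_deriv {f : ℝ → ℂ} (hf : ContDiff ℝ 1 f) (hp : Function.Periodic f (2 * π))
    (n : ℤ) : fourierCoef (deriv f) n = Complex.I * n * fourierCoef f n := by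
  have hasDerivAt_exp (x : ℝ) : HasDerivAt (fun x : ℝ => Complex.exp (-Complex.I * n * x))
      (Complex.exp (-Complex.I * n * x) * (-Complex.I * n)) x := by
    simpa using ((Complex.ofRealCLM.hasDerivAt (x := x)).const_mul (-Complex.I * n)).cexp
  have hf_cont := hf.continuous
  have hf'_cont := hf.continuous_deriv le_rfl
  have by_parts := intervalIntegral.integral_deriv_mul_eq_sub (a := 0) (b := 2 * π)
    (fun x _ => (hf.differentiable one_ne_zero x).hasDerivAt) (fun x _ => hasDerivAt_exp x)
    (hf'_cont.intervalIntegrable _ _) (Continuous.intervalIntegrable (by fun_prop) _ _)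
  rw [intervalIntegral.integral_add (Continuous.intervalIntegrable (by fun_prop) _ _)
    (Continuous.intervalIntegrable (by fun_prop) _ _), exp_neg_I_mul_int_mul_two_pi,
    Complex.ofReal_zero, mul_zero, Complex.exp_zero, hp.eq, sub_self] at by_parts
  simp only [← mul_assoc, intervalIntegral.integral_mul_const] at by_parts
  simp only [fourierCoef]
  linear_combination (1 / (2 * (π : ℂ))) * by_parts

end FourierCoef

section Decay

lemma periodic_deriv {f : ℝ → ℂ} {c : ℝ} (hf : Function.Periodic f c) :
    Function.Periodic (deriv f) c := fun x => by
  rw [← deriv_comp_add_const, hf.funext]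

lemma fourierCoef_sub_deriv_deriv {f : ℝ → ℂ} (hf : ContDiff ℝ 2 f)
    (hp : Function.Periodic f (2 * π)) (n : ℤ) :
    fourierCoef (fun x => f x - deriv (deriv f) x) n = (1 + (n : ℂ) ^ 2) * fourierCoef f n := by
  have hf' : ContDiff ℝ 1 (deriv f) := hf.deriv' (n := 1)
  rw [fourierCoef_sub hf.continuous (hf'.continuous_deriv le_rfl),
    fourierCoef_deriv hf' (periodic_deriv hp), fourierCoef_deriv (hf.of_le one_le_two) hp]
  linear_combination (-(n : ℂ) ^ 2 * fourierCoef f n) * Complex.I_sq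

lemma exists_pow_mul_norm_fourierCoef_le {f : ℝ → ℂ} (hf : ContDiff ℝ ∞ f)
    (hp : Function.Periodic f (2 * π)) (N : ℕ) :
    ∃ M : ℝ, ∀ n : ℤ, (1 + (n : ℝ) ^ 2) ^ N * ‖fourierCoef f n‖ ≤ M := by
  induction N generalizing f with
  | zero => exact ⟨_, fun n => by simpa only [pow_zero, one_mul] using norm_fourierCoef_le f n⟩
  | succ N ih =>
    have hf'' : ContDiff ℝ ∞ (deriv (deriv f)) := hf.iterate_deriv 2
    have hp'' : Function.Periodic (fun x => f x - deriv (deriv f) x) (2 * π) :=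
      hp.sub (periodic_deriv (periodic_deriv hp))
    obtain ⟨M, hM⟩ := ih (hf.sub hf'') hp''
    refine ⟨M, fun n => (hM n).trans_eq' ?_⟩
    have norm_symbol : ‖1 + (n : ℂ) ^ 2‖ = 1 + (n : ℝ) ^ 2 := by
      simpa using Complex.norm_of_nonneg (by positivity : 0 ≤ 1 + (n : ℝ) ^ 2)
    rw [fourierCoef_sub_deriv_deriv (contDiff_infty.1 hf 2) hp, norm_mul, norm_symbol]
    ring

lemma summable_rpow_mul_norm_fourierCoef {f : ℝ → ℂ} (hf : ContDiff ℝ ∞ f)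
    (hp : Function.Periodic f (2 * π)) (s : ℝ) :
    Summable fun n : ℤ => (1 + (n : ℝ) ^ 2) ^ s * ‖fourierCoef f n‖ := by
  obtain ⟨N, hN⟩ := exists_nat_ge (s + 1)
  obtain ⟨M, hM⟩ := exists_pow_mul_norm_fourierCoef_le hf hp N
  refine .of_nonneg_of_le (fun n => by positivity) (fun n => ?_)
    ((summable_one_add_int_sq_rpow (r := -1) (by norm_num)).mul_right M)
  calc (1 + (n : ℝ) ^ 2) ^ s * ‖fourierCoef f n‖
      ≤ (1 + (n : ℝ) ^ 2) ^ (-1 + N : ℝ) * ‖fourierCoef f n‖ := by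
        gcongr <;> linarith [sq_nonneg (n : ℝ)]
    _ = (1 + (n : ℝ) ^ 2) ^ (-1 : ℝ) * ((1 + (n : ℝ) ^ 2) ^ N * ‖fourierCoef f n‖) := by
        rw [rpow_add (by positivity), rpow_natCast, mul_assoc]
    _ ≤ (1 + (n : ℝ) ^ 2) ^ (-1 : ℝ) * M := by
        gcongr
        exact hM n

lemma summable_norm_fourierCoef {f : ℝ → ℂ} (hf : ContDiff ℝ ∞ f)
    (hp : Function.Periodic f (2 * π)) : Summable fun n => ‖fourierCoef f n‖ := by
  simpa only [rpow_zero, one_mul] using summable_rpow_mul_norm_fourierCoef hf hp 0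

lemma summable_rpow_mul_norm_fourierCoef_sq {f : ℝ → ℂ} (hf : ContDiff ℝ ∞ f)
    (hp : Function.Periodic f (2 * π)) (s : ℝ) :
    Summable fun n : ℤ => (1 + (n : ℝ) ^ 2) ^ s * ‖fourierCoef f n‖ ^ 2 := by
  refine .of_nonneg_of_le (fun n => by positivity) (fun n => ?_)
    ((summable_rpow_mul_norm_fourierCoef hf hp s).mul_right
      (1 / (2 * π) * ∫ x in (0 : ℝ)..2 * π, ‖f x‖))
  rw [sq ‖_‖, ← mul_assoc]
  gcongr
  exact norm_fourierCoef_le f n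

end Decay

section FourierSeries

/-- The sum `∑ c n e^{inx}` of the trigonometric series with coefficients `c`; it is only
meaningful where the series is summable. -/
noncomputable def fourierSeries (c : ℤ → ℂ) (x : ℝ) : ℂ :=
  ∑' n : ℤ, c n * Complex.exp (Complex.I * n * x)

variable {c : ℤ → ℂ} {f g : ℝ → ℂ}

lemma continuous_fourierSeries (hc : Summable fun n => ‖c n‖) : Continuous (fourierSeries c) :=
  continuous_tsum (fun n => by fun_prop) hc fun n x => by
    rw [norm_mul, norm_exp_I_mul_int_mul, mul_one]

lemma integral_exp_mul (g : ℝ → ℂ) (n : ℤ) :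
    ∫ x in (0 : ℝ)..2 * π, Complex.exp (Complex.I * n * x) * g x =
      2 * π * fourierCoef g (-n) := by
  have two_pi_ne_zero : (2 * π : ℂ) ≠ 0 := by exact_mod_cast two_pi_pos.ne'
  rw [fourierCoef, ← mul_assoc, mul_one_div_cancel two_pi_ne_zero, one_mul]
  simp only [mul_comm (g _), Int.cast_neg, mul_neg, neg_mul, neg_neg]

lemma integral_fourierSeries_mul (hc : Summable fun n => ‖c n‖) (hg : Continuous g) :
    ∫ x in (0 : ℝ)..2 * π, fourierSeries c x * g x =
      2 * π * ∑' n, c n * fourierCoef g (-n) := by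
  have norm_term (n : ℤ) (x : ℝ) :
      ‖c n * (Complex.exp (Complex.I * n * x) * g x)‖ = ‖c n‖ * ‖g x‖ := by
    rw [norm_mul, norm_mul, norm_exp_I_mul_int_mul, one_mul]
  have hasSum_pointwise (x : ℝ) :
      HasSum (fun n : ℤ => c n * (Complex.exp (Complex.I * n * x) * g x))
        (fourierSeries c x * g x) := by
    simp only [fourierSeries, ← tsum_mul_right, mul_assoc (c _)]
    exact (Summable.of_norm (by simpa only [norm_term] using hc.mul_right ‖g x‖)).hasSum
  have hasSum_integral := intervalIntegral.hasSum_integral_of_dominated_convergence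
    (μ := volume) (a := 0) (b := 2 * π) (fun n x => ‖c n‖ * ‖g x‖)
    (fun n => Continuous.aestronglyMeasurable (by fun_prop))
    (fun n => .of_forall fun x _ => (norm_term n x).le)
    (.of_forall fun x _ => hc.mul_right _)
    (by simpa only [tsum_mul_right] using Continuous.intervalIntegrable (by fun_prop) _ _)
    (.of_forall fun x _ => hasSum_pointwise x)
  rw [← hasSum_integral.tsum_eq, ← tsum_mul_left]
  simp only [intervalIntegral.integral_const_mul, integral_exp_mul, mul_left_comm]

lemma fourierCoef_fourierSeries (hc : Summable fun n => ‖c n‖) (m : ℤ) :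
    fourierCoef (fourierSeries c) m = c m := by
  have coef_exp (n : ℤ) : fourierCoef (fun x => Complex.exp (-Complex.I * m * x)) (-n) =
      (Pi.single m 1 : ℤ → ℂ) n := by
    simpa [Pi.single_apply] using fourierCoef_exp (-m) (-n)
  rw [fourierCoef, integral_fourierSeries_mul hc (by fun_prop), ← mul_assoc,
    one_div_mul_cancel (by exact_mod_cast two_pi_pos.ne'), one_mul]
  simp only [coef_exp, Pi.single_apply, mul_ite, mul_one, mul_zero, tsum_ite_eq]

lemma fourierSeries_fourierCoef (hf : Continuous f) (hp : Function.Periodic f (2 * π))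
    (hs : Summable fun n => ‖fourierCoef f n‖) (x : ℝ) : fourierSeries (fourierCoef f) x = f x := by
  have : Fact (0 < 2 * π) := ⟨two_pi_pos⟩
  let F : C(AddCircle (2 * π), ℂ) := ⟨hp.lift, continuous_coinduced_dom.2 hf⟩
  have coeff_F : fourierCoeff F = fourierCoef f := funext (fourierCoeff_eq_fourierCoef F)
  have hasSum_F := has_pointwise_sum_fourier_series_of_summable (f := F)
    (by rw [coeff_F]; exact hs.of_norm) x
  simp only [coeff_F, fourier_coe_two_pi, smul_eq_mul] at hasSum_F
  exact hasSum_F.tsum_eq.trans (hp.lift_coe x)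

lemma fourierCoef_mul (hf : Continuous f) (hp : Function.Periodic f (2 * π))
    (hs : Summable fun n => ‖fourierCoef f n‖) (hg : Continuous g) (n : ℤ) :
    fourierCoef (fun x => f x * g x) n = ∑' k, fourierCoef f k * fourierCoef g (n - k) := by
  have parseval := integral_fourierSeries_mul hs
    (g := fun x => g x * Complex.exp (-Complex.I * n * x)) (by fun_prop)
  simp only [← mul_assoc (f _), fourierSeries_fourierCoef hf hp hs, fourierCoef_mul_exp,
    neg_add_eq_sub] at parseval
  rw [fourierCoef, parseval, ← mul_assoc,
    one_div_mul_cancel (by exact_mod_cast two_pi_pos.ne'), one_mul]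

end FourierSeries

section Energy

variable {f g : ℝ → ℂ}

lemma Dop_eq_fourierSeries (s : ℝ) (f : ℝ → ℂ) :
    Dop s f = fourierSeries fun n => ((1 + (n : ℝ) ^ 2) ^ (s / 2) : ℝ) * fourierCoef f n := rfl

lemma integral_Dop_mul_Dop (s : ℝ) (hf : ContDiff ℝ ∞ f) (hfp : Function.Periodic f (2 * π))
    (hg : ContDiff ℝ ∞ g) (hgp : Function.Periodic g (2 * π)) :
    ∫ x in (0 : ℝ)..2 * π, Dop s f x * Dop s g x =
      2 * π * ∑' n : ℤ, ((1 + (n : ℝ) ^ 2) ^ s : ℝ) * (fourierCoef f n * fourierCoef g (-n)) := by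
  have norm_weight_mul (n : ℤ) (z : ℂ) : ‖(((1 + (n : ℝ) ^ 2) ^ (s / 2) : ℝ) : ℂ) * z‖ =
      (1 + (n : ℝ) ^ 2) ^ (s / 2) * ‖z‖ := by
    rw [norm_mul, Complex.norm_of_nonneg (by positivity)]
  have hf_coef := summable_rpow_mul_norm_fourierCoef hf hfp (s / 2)
  have hg_coef := summable_rpow_mul_norm_fourierCoef hg hgp (s / 2)
  simp only [← norm_weight_mul] at hf_coef hg_coef
  simp only [Dop_eq_fourierSeries]
  rw [integral_fourierSeries_mul hf_coef (continuous_fourierSeries hg_coef)]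
  simp only [fourierCoef_fourierSeries hg_coef, Int.cast_neg, neg_sq]
  congr! 3 with n
  rw [← rpow_half_sq (by positivity) s]
  push_cast
  ring

lemma fourierCoef_mul_deriv_self (hf : ContDiff ℝ ∞ f) (hp : Function.Periodic f (2 * π))
    (n : ℤ) : fourierCoef (fun y => f y * deriv f y) n =
      Complex.I * n / 2 * ∑' k, fourierCoef f k * fourierCoef f (n - k) := by
  have deriv_sq : deriv (fun y => f y * f y) = fun y => 2 * (f y * deriv f y) := by
    ext y
    have hasDerivAt_f := (hf.differentiable (by simp) y).hasDerivAt
    rw [(hasDerivAt_f.fun_mul hasDerivAt_f).deriv]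
    ring
  have coef_deriv_sq := fourierCoef_deriv ((contDiff_infty.1 hf 1).mul (contDiff_infty.1 hf 1))
    (hp.mul hp) n
  rw [deriv_sq, fourierCoef_const_mul, fourierCoef_mul hf.continuous hp
    (summable_norm_fourierCoef hf hp) hf.continuous] at coef_deriv_sq
  linear_combination coef_deriv_sq / 2

lemma integral_Dop_mul_deriv_mul_Dop (σ : ℝ) (hf : ContDiff ℝ ∞ f)
    (hp : Function.Periodic f (2 * π)) (h_energy : Summable (energyTerm σ (fourierCoef f))) :
    ∫ x in (0 : ℝ)..2 * π, Dop σ (fun y => f y * deriv f y) x * Dop σ f x =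
      -(π * Complex.I) * ∑' p, energyTerm σ (fourierCoef f) p := by
  have hf' : ContDiff ℝ ∞ (deriv f) := hf.iterate_deriv 1
  rw [integral_Dop_mul_Dop σ (hf.mul hf') (hp.mul (periodic_deriv hp)) hf hp,
    ← (Equiv.neg ℤ).tsum_eq, h_energy.tsum_prod, ← tsum_mul_left, ← tsum_mul_left]
  congr! 2 with k
  simp only [fourierCoef_mul_deriv_self hf hp, energyTerm, energySymbol, Equiv.neg_apply, neg_neg,
    Int.cast_neg, neg_sq, tsum_mul_left]
  push_cast
  ring

lemma ofReal_mul_deriv {u : ℝ → ℝ} (hu : Differentiable ℝ u) :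
    (fun y => ((u y * deriv u y : ℝ) : ℂ)) = fun y => (u y : ℂ) * deriv (fun z => (u z : ℂ)) y := by
  ext y
  rw [(hu y).hasDerivAt.ofReal_comp.deriv, Complex.ofReal_mul]

lemma sobNorm_sq (s : ℝ) (f : ℝ → ℂ) :
    sobNorm s f ^ 2 = ∑' n : ℤ, (1 + (n : ℝ) ^ 2) ^ s * ‖fourierCoef f n‖ ^ 2 :=
  sq_sqrt (tsum_nonneg fun n => by positivity)

theorem stmt_9_general {σ s : ℝ} (hσ : 0 ≤ σ) (hs : 3 / 2 < s) :
    ∃ C : ℝ, 0 < C ∧ ∀ f : ℝ → ℂ, ContDiff ℝ ∞ f → Function.Periodic f (2 * π) →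
      ‖∫ x in (0 : ℝ)..2 * π, Dop σ (fun y => f y * deriv f y) x * Dop σ f x‖ ≤
        C * sobNorm s f * sobNorm σ f ^ 2 := by
  set W : ℝ := ∑' n : ℤ, (1 + (n : ℝ) ^ 2) ^ (2 * (1 / 2) - s)
  have W_pos : 0 < W := (summable_one_add_int_sq_rpow (by linarith)).tsum_pos
    (fun n => by positivity) 0 (by positivity)
  refine ⟨π * resonanceConst σ * √W,
    mul_pos (mul_pos pi_pos (resonanceConst_pos hσ)) (sqrt_pos.2 W_pos), fun f hf hp => ?_⟩
  have h_energy : Summable (energyTerm σ (fourierCoef f)) := summable_energyTerm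
    (summable_rpow_mul_norm_fourierCoef hf hp _)
    (by simpa using summable_rpow_mul_norm_fourierCoef_sq hf hp 0)
  have energy_le := norm_tsum_energyTerm_le hσ h_energy
    (summable_rpow_mul_norm_fourierCoef hf hp _) (summable_rpow_mul_norm_fourierCoef_sq hf hp σ)
  have low_le := tsum_rpow_mul_norm_le_sqrt_mul_sqrt (r := 1 / 2) (by linarith)
    (summable_rpow_mul_norm_fourierCoef_sq hf hp s)
  have norm_const : ‖-(π * Complex.I)‖ = π := by simp [pi_pos.le]
  rw [integral_Dop_mul_deriv_mul_Dop σ hf hp h_energy, norm_mul, norm_const]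
  rw [← sobNorm_sq] at energy_le
  have resonanceConst_nonneg := (resonanceConst_pos hσ).le
  calc π * ‖∑' p, energyTerm σ (fourierCoef f) p‖
      ≤ π * (resonanceConst σ * ((√W * sobNorm s f) * sobNorm σ f ^ 2)) := by
        gcongr
        refine energy_le.trans ?_
        gcongr
        exact low_le
    _ = π * resonanceConst σ * √W * sobNorm s f * sobNorm σ f ^ 2 := by ring

end Energy

/-- trilinear energy estimate: for every real `σ ≥ 2` there is `C > 0`
such that for all smooth real-valued `2π`-periodic `u`:
`|∫₀^{2π} D^σ(u·∂ₓu)·(D^σ u) dx| ≤ C·‖u‖_{H²}·‖u‖_{H^σ}²`. -/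
theorem stmt_9 (σ : ℝ) (hσ : 2 ≤ σ) :
    ∃ C : ℝ, 0 < C ∧ ∀ u : ℝ → ℝ,
      ContDiff ℝ (⊤ : ℕ∞) u → (∀ x, u (x + 2 * Real.pi) = u x) →
      ‖∫ x in (0:ℝ)..(2 * Real.pi),
          Dop σ (fun y => ((u y * deriv u y : ℝ) : ℂ)) x *
            Dop σ (fun y => ((u y : ℝ) : ℂ)) x‖
        ≤ C * sobNorm 2 (fun y => ((u y : ℝ) : ℂ)) *
            sobNorm σ (fun y => ((u y : ℝ) : ℂ)) ^ 2 := by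
  obtain ⟨C, hC, h⟩ := stmt_9_general (zero_le_two.trans hσ) (by norm_num : (3 / 2 : ℝ) < 2)
  exact ⟨C, hC, fun u hu hp => ofReal_mul_deriv (hu.differentiable (by simp)) ▸
    h (fun y => u y) (Complex.ofRealCLM.contDiff.comp hu) fun y => by simp only [hp]⟩
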